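/- Prenex normal forms for CPL: for every CPL formula A there exists a formula B in prenex normal form — i.e. B = Op₁ ⋯ Opₙ A₀ where each Opⱼ is a counting quantifier C^{qⱼ}_{aⱼ} or D^{qⱼ}_{aⱼ} and the matrix A₀ contains no counting quantifier — such that for every finite name set X with FN(A) ∪ FN(B) ⊆ X, A ≡_X B. -/

import Mathlib

open MeasureTheory

/-- The Cantor space `2^ω` of infinite binary sequences. -/
abbrev Cantor : Type := ℕ → Bool

/-- Rational numbers in the unit interval `[0,1]`. -/
abbrev I01 : Type := (Set.Icc (0 : ℚ) 1)

/-- The value of a rational `q ∈ [0,1]` as an extended nonnegative real. -/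
noncomputable def qq (q : I01) : ENNReal := ENNReal.ofReal (q.1 : ℝ)

/-- `μ` is the fair-coin Bernoulli (uniform) product measure on the Cantor space:
it is a probability measure giving each cylinder fixing the values on a finite set `s`
of coordinates the measure `2^{-|s|}`. -/
def IsCantorMeasure (μ : Measure Cantor) : Prop :=
  IsProbabilityMeasure μ ∧
    ∀ (s : Finset ℕ) (v : ℕ → Bool),
      μ {f : Cantor | ∀ i ∈ s, f i = v i} = (2 : ENNReal)⁻¹ ^ s.card

/-- Valuations of the names in a finite name set `X`: the space `(2^ω)^X`. -/
abbrev Val (X : Finset ℕ) : Type := {a : ℕ // a ∈ X} → Cantor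

/-- `combine f g` is the common extension `f + g` of valuations `f ∈ (2^ω)^X` and
`g ∈ (2^ω)^Y`: it agrees with `f` on `X` and with `g` on `Y` (when `X` and `Y` are
disjoint this is the `f + g` of the paper). -/
def combine {X Y : Finset ℕ} (f : Val X) (g : Val Y) : Val (X ∪ Y) :=
  fun a =>
    if h : a.1 ∈ Y then g ⟨a.1, h⟩
    else f ⟨a.1, (Finset.mem_union.mp a.2).resolve_right h⟩

/-- The `f`-projection `Π_f(𝒳) = {g ∈ (2^ω)^Y | f + g ∈ 𝒳}` of a set
`𝒳 ⊆ (2^ω)^{X∪Y}` along `f ∈ (2^ω)^X`. -/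
def proj {X Y : Finset ℕ} (f : Val X) (S : Set (Val (X ∪ Y))) : Set (Val Y) :=
  {g | combine f g ∈ S}

/-- The fair-coin Bernoulli (uniform) product measure on `(2^ω)^X`, obtained as the
pushforward of the Cantor measure `μ` along the (coordinate-separating) injection
determined by the pairing function: the coordinates `(a, i)` are i.i.d. fair coins. -/
noncomputable def cantorPi (μ : Measure Cantor) (X : Finset ℕ) : Measure (Val X) :=
  Measure.map (fun (g : Cantor) (a : {x : ℕ // x ∈ X}) (i : ℕ) => g (Nat.pair a.1 i)) μ

/-- Named Boolean formulas `b ::= xᵢᵃ | ⊤ | ⊥ | ¬b | b ∧ c | b ∨ c`.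
`NBF.var i a` is the named propositional variable `xᵢᵃ`. -/
inductive NBF : Type where
  | var : ℕ → ℕ → NBF
  | tt : NBF
  | ff : NBF
  | neg : NBF → NBF
  | conj : NBF → NBF → NBF
  | disj : NBF → NBF → NBF
deriving DecidableEq

/-- The set of (free) names occurring in a named Boolean formula. -/
def NBF.FN : NBF → Finset ℕ
  | .var _ a => {a}
  | .tt => ∅
  | .ff => ∅
  | .neg b => b.FN
  | .conj b c => b.FN ∪ c.FN
  | .disj b c => b.FN ∪ c.FN

/-- The interpretation `⟦b⟧_X ⊆ (2^ω)^X` of a named Boolean formula with `FN(b) ⊆ X`. -/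
def NBF.semN : NBF → (X : Finset ℕ) → Set (Val X)
  | .var i a, X => {f | ∀ h : a ∈ X, f ⟨a, h⟩ i = true}
  | .tt, _ => Set.univ
  | .ff, _ => ∅
  | .neg b, X => (b.semN X)ᶜ
  | .conj b c, X => b.semN X ∩ c.semN X
  | .disj b c, X => b.semN X ∪ c.semN X

/-- The disjunction `⋁_{i<k} c i` of a finite family of named Boolean formulas. -/
def NBF.bigDisj {k : ℕ} (c : Fin k → NBF) : NBF :=
  (List.ofFn c).foldr NBF.disj NBF.ff

/-- Formulas of (multivariate) counting propositional logic CPL: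
`A ::= i_a | ¬A | A ∧ B | A ∨ B | C^q_a A | D^q_a A`, with `i ∈ ℕ`, `a` a name and
`q` a rational in `[0,1]`.  `CPL.atom i a` is the named atom `i_a`, and
`CPL.cnt q a A` (resp. `CPL.dnt q a A`) is `C^q_a A` (resp. `D^q_a A`). -/
inductive CPL : Type where
  | atom : ℕ → ℕ → CPL
  | neg : CPL → CPL
  | conj : CPL → CPL → CPL
  | disj : CPL → CPL → CPL
  | cnt : I01 → ℕ → CPL → CPL
  | dnt : I01 → ℕ → CPL → CPL
deriving DecidableEq

/-- The set of free names of a CPL formula; `a` is bound in `C^q_a A` and `D^q_a A`. -/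
def CPL.FN : CPL → Finset ℕ
  | .atom _ a => {a}
  | .neg A => A.FN
  | .conj A B => A.FN ∪ B.FN
  | .disj A B => A.FN ∪ B.FN
  | .cnt _ a A => A.FN \ {a}
  | .dnt _ a A => A.FN \ {a}

/-- The interpretation `⟦A⟧_X ⊆ (2^ω)^X` of a CPL formula `A` with `FN(A) ⊆ X`:
`⟦C^q_a A⟧_X = {f | μ(Π_f(⟦A⟧_{X∪{a}})) ≥ q}` and
`⟦D^q_a A⟧_X = {f | μ(Π_f(⟦A⟧_{X∪{a}})) < q}`. -/
noncomputable def CPL.semN (μ : Measure Cantor) : CPL → (X : Finset ℕ) → Set (Val X)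
  | .atom i a, X => {f | ∀ h : a ∈ X, f ⟨a, h⟩ i = true}
  | .neg A, X => (CPL.semN μ A X)ᶜ
  | .conj A B, X => CPL.semN μ A X ∩ CPL.semN μ B X
  | .disj A B, X => CPL.semN μ A X ∪ CPL.semN μ B X
  | .cnt q a A, X =>
      {f | qq q ≤ cantorPi μ {a} (proj (Y := {a}) f (CPL.semN μ A (X ∪ {a})))}
  | .dnt q a A, X =>
      {f | cantorPi μ {a} (proj (Y := {a}) f (CPL.semN μ A (X ∪ {a}))) < qq q}

/-- A CPL formula is quantifier-free when it contains no counting quantifier. -/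
def CPL.QFree : CPL → Prop
  | .atom _ _ => True
  | .neg A => A.QFree
  | .conj A B => A.QFree ∧ B.QFree
  | .disj A B => A.QFree ∧ B.QFree
  | .cnt _ _ _ => False
  | .dnt _ _ _ => False

/-- Prenex normal forms: `Op₁ ⋯ Opₙ A₀` where each `Opⱼ` is `C^{qⱼ}_{aⱼ}` or
`D^{qⱼ}_{aⱼ}` and the matrix `A₀` contains no counting quantifier. -/
inductive CPL.IsPNF : CPL → Prop where
  | matrix {A : CPL} : A.QFree → CPL.IsPNF A
  | cnt {A : CPL} (q : I01) (a : ℕ) : CPL.IsPNF A → CPL.IsPNF (.cnt q a A)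
  | dnt {A : CPL} (q : I01) (a : ℕ) : CPL.IsPNF A → CPL.IsPNF (.dnt q a A)

/-- Positive prenex normal forms: prenex normal forms in which no `D`-quantifier
occurs, i.e. `C^{q₁}_{a₁} ⋯ C^{qₙ}_{aₙ} A₀` with `A₀` quantifier-free. -/
inductive CPL.IsPPNF : CPL → Prop where
  | matrix {A : CPL} : A.QFree → CPL.IsPPNF A
  | cnt {A : CPL} (q : I01) (a : ℕ) : CPL.IsPPNF A → CPL.IsPPNF (.cnt q a A)

/-!
Evaluate formulas on valuations of *all* names, so that a formula denotes a predicate on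
`ℕ → Cantor` and `C^q_a` an operator on such predicates. Since `D^q_a` is the negation of `C^q_a`,
everything reduces to pulling `C^q_b` out of a conjunction or disjunction with a predicate `Ψ` not
depending on `b`: for fixed truth value of `Ψ`, the set `{g | Φ ∧ Ψ}` is `{g | Φ}` or empty and
`{g | Φ ∨ Ψ}` is `{g | Φ}` or everything. The only exception is `C^0_b`, which is always true and
is deleted. The bound name is first changed to a fresh one; this preserves the meaning because
every name is interpreted by the same measure.
-/

theorem qq_le_one (q : I01) : qq q ≤ 1 :=
  ENNReal.ofReal_le_one.2 (mod_cast q.2.2)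

section Threshold

variable {α : Type*} [MeasurableSpace α] {μ : Measure α} {q : ENNReal}

theorem le_measure_setOf_and_const_iff (hq : q ≠ 0) (p : α → Prop) (r : Prop) :
    q ≤ μ {x | p x ∧ r} ↔ q ≤ μ {x | p x} ∧ r := by
  by_cases hr : r <;> simp [hr, hq]

theorem le_measure_setOf_or_const_iff (hq : q ≤ μ Set.univ) (p : α → Prop) (r : Prop) :
    q ≤ μ {x | p x ∨ r} ↔ q ≤ μ {x | p x} ∨ r := by
  by_cases hr : r <;> simp [hr, hq]

end Threshold

theorem finset_restrict_surjective {ι : Type*} {π : ι → Type*} [∀ i, Nonempty (π i)]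
    (s : Finset ι) : (s.restrict (π := π)).Surjective :=
  Subtype.surjective_restrict (· ∈ s)

namespace IsCantorMeasure

variable {μ ν : Measure Cantor}

theorem map_restrict_singleton (hμ : IsCantorMeasure μ) (s : Finset ℕ) (v : s → Bool) :
    μ.map s.restrict {v} = 2⁻¹ ^ s.card := by
  obtain ⟨w, rfl⟩ := finset_restrict_surjective (π := fun _ ↦ Bool) s v
  rw [Measure.map_apply (by fun_prop) (measurableSet_singleton _), ← hμ.2 s w]
  congr 1
  ext f
  simp [funext_iff]

theorem unique (hμ : IsCantorMeasure μ) (hν : IsCantorMeasure ν) : μ = ν := by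
  have := hν.1
  have hlim : IsProjectiveLimit μ fun s ↦ ν.map s.restrict := fun s ↦
    Measure.ext_of_singleton fun v ↦ by
      rw [hμ.map_restrict_singleton, hν.map_restrict_singleton]
  exact hlim.unique fun _ ↦ rfl

theorem map_comp (hμ : IsCantorMeasure μ) {φ : ℕ → ℕ} (hφ : φ.Injective) :
    μ.map (fun g : Cantor ↦ g ∘ φ) = μ := by
  have := hμ.1
  have hmeas : Measurable fun g : Cantor ↦ g ∘ φ := by unfold Function.comp; fun_prop
  refine unique ⟨Measure.isProbabilityMeasure_map hmeas.aemeasurable, fun s v ↦ ?_⟩ hμ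
  have hcyl : MeasurableSet {f : Cantor | ∀ i ∈ s, f i = v i} := by measurability
  rw [Measure.map_apply hmeas hcyl, ← Finset.card_image_of_injective s hφ,
    ← hμ.2 (s.image φ) (Function.extend φ v v)]
  congr 1
  ext f
  simp [hφ.extend_apply]

theorem cantorPi_singleton (hμ : IsCantorMeasure μ) (a : ℕ) :
    cantorPi μ {a} = μ.map (MeasurableEquiv.funUnique ({a} : Finset ℕ) Cantor).symm := by
  have hpair : (Nat.pair a).Injective := fun i j h ↦ (Nat.pair_eq_pair.1 h).2
  conv_rhs => rw [← hμ.map_comp hpair]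
  rw [Measure.map_map (MeasurableEquiv.measurable _) (by unfold Function.comp; fun_prop)]
  unfold cantorPi
  congr 1
  funext g ⟨b, hb⟩
  obtain rfl := Finset.mem_singleton.1 hb
  rfl

theorem cantorPi_singleton_apply (hμ : IsCantorMeasure μ) (a : ℕ) (S : Set (Val {a})) :
    cantorPi μ {a} S = μ {g | (fun _ ↦ g) ∈ S} := by
  rw [hμ.cantorPi_singleton, MeasurableEquiv.map_apply]
  rfl

end IsCantorMeasure

theorem combine_restrict (X : Finset ℕ) (a : ℕ) (F : ℕ → Cantor) (g : Cantor) :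
    combine (Y := {a}) (X.restrict F) (fun _ ↦ g) = (X ∪ {a}).restrict (Function.update F a g) := by
  funext ⟨b, hb⟩
  by_cases hba : b = a
  · subst hba; simp [combine]
  · simp [combine, hba]

namespace CPL

/-- The counting quantifier `C^q_a` as an operator on predicates of valuations of all names. -/
def AtLeast (μ : Measure Cantor) (q : I01) (a : ℕ) (Φ : (ℕ → Cantor) → Prop) :
    (ℕ → Cantor) → Prop :=
  fun F ↦ qq q ≤ μ {g | Φ (Function.update F a g)}

/-- The interpretation of a formula on valuations of all names at once, with every bound name
ranging over `Cantor` with the measure `μ`. Unlike `CPL.semN`, it has one type for all formulas,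
which lets names be renamed by precomposition. -/
def Holds (μ : Measure Cantor) : CPL → (ℕ → Cantor) → Prop
  | .atom i a => fun F ↦ F a i = true
  | .neg A => fun F ↦ ¬ Holds μ A F
  | .conj A B => fun F ↦ Holds μ A F ∧ Holds μ B F
  | .disj A B => fun F ↦ Holds μ A F ∨ Holds μ B F
  | .cnt q a A => AtLeast μ q a (Holds μ A)
  | .dnt q a A => fun F ↦ μ {g | Holds μ A (Function.update F a g)} < qq q

variable {μ : Measure Cantor}

theorem holds_dnt (q : I01) (a : ℕ) (A : CPL) :
    (dnt q a A).Holds μ = fun F ↦ ¬ (cnt q a A).Holds μ F :=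
  funext fun _ ↦ propext not_le.symm

theorem restrict_mem_semN_iff (hμ : IsCantorMeasure μ) {A : CPL} {X : Finset ℕ} (hA : A.FN ⊆ X)
    (F : ℕ → Cantor) : X.restrict F ∈ A.semN μ X ↔ A.Holds μ F := by
  induction A generalizing X F with
  | atom i a =>
    have ha : a ∈ X := Finset.singleton_subset_iff.1 hA
    simp [semN, Holds, ha]
  | neg A ih => exact not_congr (ih hA F)
  | conj A B ihA ihB =>
    obtain ⟨hA, hB⟩ := Finset.union_subset_iff.1 hA
    exact and_congr (ihA hA F) (ihB hB F)
  | disj A B ihA ihB =>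
    obtain ⟨hA, hB⟩ := Finset.union_subset_iff.1 hA
    exact or_congr (ihA hA F) (ihB hB F)
  | cnt q a A ih | dnt q a A ih =>
    have hA' : A.FN ⊆ X ∪ {a} := sdiff_le_iff'.1 hA
    simp only [semN, Holds, AtLeast, Set.mem_ofPred_eq, hμ.cantorPi_singleton_apply, proj,
      combine_restrict, ih hA']

theorem semN_eq_of_holds_eq (hμ : IsCantorMeasure μ) {A B : CPL} (h : A.Holds μ = B.Holds μ)
    {X : Finset ℕ} (hA : A.FN ⊆ X) (hB : B.FN ⊆ X) : A.semN μ X = B.semN μ X := by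
  ext f
  obtain ⟨F, rfl⟩ := finset_restrict_surjective (π := fun _ ↦ Cantor) X f
  rw [restrict_mem_semN_iff hμ hA, restrict_mem_semN_iff hμ hB, h]

theorem dependsOn_holds (μ : Measure Cantor) (A : CPL) : DependsOn (A.Holds μ) A.FN := by
  induction A with
  | atom i a => exact fun F G h ↦ by simp only [Holds, h a (Finset.mem_singleton_self a)]
  | neg A ih => exact fun F G h ↦ congrArg Not (ih h)
  | conj A B ihA ihB =>
    exact fun F G h ↦ congrArg₂ And (ihA fun c hc ↦ h c (Finset.mem_union_left _ hc))
      (ihB fun c hc ↦ h c (Finset.mem_union_right _ hc))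
  | disj A B ihA ihB =>
    exact fun F G h ↦ congrArg₂ Or (ihA fun c hc ↦ h c (Finset.mem_union_left _ hc))
      (ihB fun c hc ↦ h c (Finset.mem_union_right _ hc))
  | cnt q a A ih | dnt q a A ih =>
    intro F G h
    rw [FN, Finset.sdiff_singleton_eq_erase] at h
    simp only [Holds, AtLeast, fun g ↦ ih.update a g h]

theorem holds_update_of_notMem {A : CPL} {a : ℕ} (ha : a ∉ A.FN) (F : ℕ → Cantor) (g : Cantor) :
    A.Holds μ (Function.update F a g) = A.Holds μ F :=
  dependsOn_holds μ A fun _ hc ↦ Function.update_of_ne (ne_of_mem_of_not_mem hc ha) _ _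

theorem holds_update_comp_update {A : CPL} {σ : ℕ → ℕ} {b : ℕ} (hb : b ∉ A.FN.image σ) (a : ℕ)
    (F : ℕ → Cantor) (g : Cantor) :
    A.Holds μ (Function.update F b g ∘ Function.update σ a b) =
      A.Holds μ (Function.update (F ∘ σ) a g) := by
  refine dependsOn_holds μ A fun c hc ↦ ?_
  by_cases hca : c = a
  · subst hca; simp
  · have hσc : σ c ≠ b := ne_of_mem_of_not_mem (Finset.mem_image_of_mem σ hc) hb
    simp [hca, hσc]

theorem holds_cnt_comp_eq_atLeast {A : CPL} {σ : ℕ → ℕ} {b : ℕ} (hb : b ∉ A.FN.image σ)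
    (q : I01) (a : ℕ) :
    (fun F ↦ (cnt q a A).Holds μ (F ∘ σ)) =
      AtLeast μ q b fun F ↦ A.Holds μ (F ∘ Function.update σ a b) := by
  funext F
  simp only [Holds, AtLeast, holds_update_comp_update hb]

theorem QFree.exists_holds_eq_comp {A : CPL} (hA : A.QFree) (μ : Measure Cantor) (σ : ℕ → ℕ) :
    ∃ B : CPL, B.QFree ∧ B.Holds μ = fun F ↦ A.Holds μ (F ∘ σ) := by
  induction A with
  | atom i a => exact ⟨atom i (σ a), trivial, rfl⟩
  | neg A ih =>
    obtain ⟨B, hB, h⟩ := ih hA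
    exact ⟨neg B, hB, by simp only [Holds, h]⟩
  | conj A₁ A₂ ih₁ ih₂ =>
    obtain ⟨B₁, hB₁, h₁⟩ := ih₁ hA.1
    obtain ⟨B₂, hB₂, h₂⟩ := ih₂ hA.2
    exact ⟨conj B₁ B₂, ⟨hB₁, hB₂⟩, by simp only [Holds, h₁, h₂]⟩
  | disj A₁ A₂ ih₁ ih₂ =>
    obtain ⟨B₁, hB₁, h₁⟩ := ih₁ hA.1
    obtain ⟨B₂, hB₂, h₂⟩ := ih₂ hA.2
    exact ⟨disj B₁ B₂, ⟨hB₁, hB₂⟩, by simp only [Holds, h₁, h₂]⟩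
  | cnt | dnt => exact hA.elim

/-- A predicate on valuations is prenex definable if some prenex normal form denotes it. -/
def PrenexDefinable (μ : Measure Cantor) (Φ : (ℕ → Cantor) → Prop) : Prop :=
  ∃ B : CPL, B.IsPNF ∧ B.Holds μ = Φ

variable {Φ Ψ : (ℕ → Cantor) → Prop}

theorem atLeast_and {q : I01} {b : ℕ} (hq : qq q ≠ 0)
    (hΨ : ∀ F g, Ψ (Function.update F b g) = Ψ F) :
    (AtLeast μ q b fun F ↦ Φ F ∧ Ψ F) = fun F ↦ AtLeast μ q b Φ F ∧ Ψ F := by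
  funext F
  simp only [AtLeast, hΨ, le_measure_setOf_and_const_iff hq]

theorem atLeast_or [IsProbabilityMeasure μ] {q : I01} {b : ℕ}
    (hΨ : ∀ F g, Ψ (Function.update F b g) = Ψ F) :
    (AtLeast μ q b fun F ↦ Φ F ∨ Ψ F) = fun F ↦ AtLeast μ q b Φ F ∨ Ψ F := by
  have hq : qq q ≤ μ Set.univ := (qq_le_one q).trans_eq measure_univ.symm
  funext F
  simp only [AtLeast, hΨ, le_measure_setOf_or_const_iff hq]

namespace PrenexDefinable

theorem not (hΦ : PrenexDefinable μ Φ) : PrenexDefinable μ fun F ↦ ¬ Φ F := by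
  obtain ⟨B, hB, rfl⟩ := hΦ
  cases hB with
  | matrix hB => exact ⟨neg B, .matrix hB, rfl⟩
  | @cnt A q a hA => exact ⟨dnt q a A, hA.dnt q a, holds_dnt q a A⟩
  | @dnt A q a hA => exact ⟨cnt q a A, hA.cnt q a, by simp only [holds_dnt, not_not]⟩

theorem atLeast (hΦ : PrenexDefinable μ Φ) (q : I01) (a : ℕ) :
    PrenexDefinable μ (AtLeast μ q a Φ) := by
  obtain ⟨B, hB, rfl⟩ := hΦ
  exact ⟨cnt q a B, hB.cnt q a, rfl⟩

end PrenexDefinable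

/-- `Φ` can be merged with `Ψ` when the conjunction `Φ ∧ Ψ` and the disjunction `Φ ∨ ¬ Ψ` are
prenex definable. Having `¬ Ψ` in the disjunction makes the notion invariant under negating `Φ`,
so that `D`-quantifiers in front of `Φ` reduce to `C`-quantifiers. -/
def Mergeable (μ : Measure Cantor) (Φ Ψ : (ℕ → Cantor) → Prop) : Prop :=
  (PrenexDefinable μ fun F ↦ Φ F ∧ Ψ F) ∧ PrenexDefinable μ fun F ↦ Φ F ∨ ¬ Ψ F

namespace Mergeable

theorem not (h : Mergeable μ Φ Ψ) : Mergeable μ (fun F ↦ ¬ Φ F) Ψ :=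
  ⟨by simpa only [not_or, not_not] using h.2.not, by simpa only [not_and_or] using h.1.not⟩

theorem of_and (h : PrenexDefinable μ fun F ↦ Φ F ∧ Ψ F)
    (h' : PrenexDefinable μ fun F ↦ ¬ Φ F ∧ Ψ F) : Mergeable μ Φ Ψ :=
  ⟨h, by simpa only [not_and_or, not_not] using h'.not⟩

theorem atLeast [IsProbabilityMeasure μ] (h : Mergeable μ Φ Ψ) (hΨ : PrenexDefinable μ Ψ) {b : ℕ}
    (hb : ∀ F g, Ψ (Function.update F b g) = Ψ F) (q : I01) :
    Mergeable μ (AtLeast μ q b Φ) Ψ := by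
  constructor
  · by_cases hq : qq q = 0
    · simpa only [AtLeast, hq, zero_le, true_and] using hΨ
    · exact atLeast_and hq hb ▸ h.1.atLeast q b
  · have hb' (F : ℕ → Cantor) (g : Cantor) : (¬ Ψ (Function.update F b g)) = ¬ Ψ F := by rw [hb]
    simpa only [atLeast_or (Ψ := fun F ↦ ¬ Ψ F) hb'] using h.2.atLeast q b

end Mergeable

section Merging

variable [IsProbabilityMeasure μ]

theorem PrenexDefinable.mergeable_cnt_comp (hΨ : PrenexDefinable μ Ψ) {A : CPL}
    (hA : ∀ σ : ℕ → ℕ, Mergeable μ (fun F ↦ A.Holds μ (F ∘ σ)) Ψ) (q : I01) (a : ℕ) (σ : ℕ → ℕ) :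
    Mergeable μ (fun F ↦ (cnt q a A).Holds μ (F ∘ σ)) Ψ := by
  obtain ⟨B, hB, rfl⟩ := hΨ
  obtain ⟨b, hb⟩ := Infinite.exists_notMem_finset (A.FN.image σ ∪ B.FN)
  obtain ⟨hbA, hbB⟩ := Finset.notMem_union.1 hb
  rw [holds_cnt_comp_eq_atLeast hbA]
  exact (hA _).atLeast ⟨B, hB, rfl⟩ (holds_update_of_notMem hbB) q

theorem PrenexDefinable.mergeable_comp (hΨ : PrenexDefinable μ Ψ)
    (hmatrix : ∀ A : CPL, A.QFree → ∀ σ : ℕ → ℕ,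
      PrenexDefinable μ fun F ↦ A.Holds μ (F ∘ σ) ∧ Ψ F)
    {A : CPL} (hA : A.IsPNF) (σ : ℕ → ℕ) : Mergeable μ (fun F ↦ A.Holds μ (F ∘ σ)) Ψ := by
  induction hA generalizing σ with
  | @matrix A hA => exact .of_and (hmatrix A hA σ) (hmatrix (neg A) hA σ)
  | cnt q a _ ih => exact hΨ.mergeable_cnt_comp ih q a σ
  | dnt q a _ ih => simpa only [holds_dnt] using (hΨ.mergeable_cnt_comp ih q a σ).not

theorem PrenexDefinable.qFree_and {B : CPL} (hB : B.QFree) (hΨ : PrenexDefinable μ Ψ) :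
    PrenexDefinable μ fun F ↦ B.Holds μ F ∧ Ψ F := by
  have hmatrix (A : CPL) (hA : A.QFree) (σ : ℕ → ℕ) :
      PrenexDefinable μ fun F ↦ A.Holds μ (F ∘ σ) ∧ B.Holds μ F := by
    obtain ⟨A', hA', h⟩ := hA.exists_holds_eq_comp μ σ
    exact ⟨conj A' B, .matrix ⟨hA', hB⟩, by simp only [Holds, h]⟩
  obtain ⟨A, hA, rfl⟩ := hΨ
  have hB' : PrenexDefinable μ (B.Holds μ) := ⟨B, .matrix hB, rfl⟩
  simpa only [and_comm, Function.comp_id] using (hB'.mergeable_comp hmatrix hA id).1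

theorem PrenexDefinable.and (hΦ : PrenexDefinable μ Φ) (hΨ : PrenexDefinable μ Ψ) :
    PrenexDefinable μ fun F ↦ Φ F ∧ Ψ F := by
  have hmatrix (A : CPL) (hA : A.QFree) (σ : ℕ → ℕ) :
      PrenexDefinable μ fun F ↦ A.Holds μ (F ∘ σ) ∧ Ψ F := by
    obtain ⟨A', hA', h⟩ := hA.exists_holds_eq_comp μ σ
    simpa only [h] using qFree_and hA' hΨ
  obtain ⟨A, hA, rfl⟩ := hΦ
  exact (hΨ.mergeable_comp hmatrix hA id).1

theorem PrenexDefinable.or (hΦ : PrenexDefinable μ Φ) (hΨ : PrenexDefinable μ Ψ) :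
    PrenexDefinable μ fun F ↦ Φ F ∨ Ψ F := by
  simpa only [not_and_or, not_not] using (hΦ.not.and hΨ.not).not

end Merging

theorem prenexDefinable_holds (μ : Measure Cantor) [IsProbabilityMeasure μ] (A : CPL) :
    PrenexDefinable μ (A.Holds μ) := by
  induction A with
  | atom i a => exact ⟨atom i a, .matrix trivial, rfl⟩
  | neg A ih => exact ih.not
  | conj A B ihA ihB => exact ihA.and ihB
  | disj A B ihA ihB => exact ihA.or ihB
  | cnt q a A ih => exact ih.atLeast q a
  | dnt q a A ih => exact holds_dnt q a A ▸ (ih.atLeast q a).not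

end CPL

/-- **Prenex normal forms.** For every CPL formula `A` there is a
formula `B` in prenex normal form such that `A ≡_X B` for every finite name set `X`
with `FN(A) ∪ FN(B) ⊆ X`. -/
theorem cpl_prenex_normal_form
    (μ : Measure Cantor) (hμ : IsCantorMeasure μ) (A : CPL) :
    ∃ B : CPL, B.IsPNF ∧
      ∀ X : Finset ℕ, A.FN ∪ B.FN ⊆ X → CPL.semN μ A X = CPL.semN μ B X := by
  have := hμ.1
  obtain ⟨B, hB, hBA⟩ := CPL.prenexDefinable_holds μ A
  refine ⟨B, hB, fun X hX ↦ ?_⟩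
  obtain ⟨hAX, hBX⟩ := Finset.union_subset_iff.1 hX
  exact CPL.semN_eq_of_holds_eq hμ hBA.symm hAX hBX
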